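/- Fix an integer k ≥ 2. For each n ≥ 1, let Δ'_n be the family of 2k-element subsets of [(4k−1)n] consisting of: (i) all facets of B([1, (4k−1)n], 2k−1) that are not contained in any interval {(4k−1)m+1, …, (4k−1)m+4k−1} with 0 ≤ m ≤ n−1; and (ii) the sets {(4k−1)m+1, (4k−1)m+3, …, (4k−1)m+4k−1} for all 0 ≤ m ≤ n−1. Then lim_{n→∞} T(Δ'_n)/((4k−1)n) = 2k/(4k−1). -/

import Mathlib

/-- `F` is a facet of `B([a,b], 2k-1)`: `F = {i_1, i_1+1, …, i_k, i_k+1}` with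
`a ≤ i_j`, `i_j + 1 < i_{j'}` for `j < j'`, and `i_j + 1 ≤ b`. For `k = 0` the unique
facet is `∅` (the convention `B([a,b],-1) = {∅}`). -/
def BFacet (a b k : ℕ) (F : Finset ℕ) : Prop :=
  ∃ i : Fin k → ℕ,
    (∀ j, a ≤ i j ∧ i j + 1 ≤ b) ∧
    (∀ j j' : Fin k, j < j' → i j + 1 < i j') ∧
    F = Finset.univ.biUnion fun j => {i j, i j + 1}

/-- The family `Δ'_n`: facets of `B([1,(4k-1)n], 2k-1)` not contained in any interval
`{(4k-1)m+1, …, (4k-1)m+4k-1}` with `m < n`, together with the sets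
`{(4k-1)m+1, (4k-1)m+3, …, (4k-1)m+4k-1}` for `m < n`. -/
def DeltaFam' (k n : ℕ) (F : Finset ℕ) : Prop :=
  (BFacet 1 ((4 * k - 1) * n) k F ∧
    ¬ ∃ m < n, F ⊆ Finset.Icc ((4 * k - 1) * m + 1) ((4 * k - 1) * m + 4 * k - 1)) ∨
  (∃ m < n, F = Finset.image (fun j : Fin (2 * k) => (4 * k - 1) * m + 2 * j.val + 1)
      Finset.univ)

/-- The transversal number of `Δ'_n`. -/
noncomputable def DeltaT' (k n : ℕ) : ℕ :=
  sInf {c : ℕ | ∃ S : Finset ℕ, S ⊆ Finset.Icc 1 ((4 * k - 1) * n) ∧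
    (∀ F, DeltaFam' k n F → (S ∩ F).Nonempty) ∧ S.card = c}

/-!
Cut `[(4k-1)n]` into `n` consecutive blocks of length `4k-1`. Taking every other point of each
block, starting with its first, gives `2k` points per block; together they meet every pair
`{i, i+1}`, hence every facet, and contain the sets of type (ii). Conversely, if a transversal `S`
left a pair `{i, i+1}` uncovered in each of `k ≥ 2` blocks, these pairs would form a facet lying in
no single block and missing `S`. So all but fewer than `k` blocks have no uncovered pair. In such a
block `S` contains a point in odd position, and the other points split into `2k-1` consecutive
pairs, each of which meets `S`, so `S` has at least `2k` points there.
Therefore `2kn - 2k² ≤ T(Δ'_n) ≤ 2kn`.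
-/

open Finset Filter Topology

theorem tendsto_div_natCast_of_abs_sub_mul_le {u : ℕ → ℝ} {c C : ℝ}
    (h : ∀ n : ℕ, |u n - c * n| ≤ C) : Tendsto (fun n => u n / n) atTop (𝓝 c) := by
  rw [tendsto_iff_norm_sub_tendsto_zero]
  refine squeeze_zero' (.of_forall fun _ => norm_nonneg _) ?_
    (tendsto_const_div_atTop_nhds_zero_nat C)
  filter_upwards [eventually_gt_atTop 0] with n hn
  have hn' : (0 : ℝ) < n := Nat.cast_pos.2 hn
  rw [div_sub' hn'.ne', norm_div, Real.norm_natCast, Real.norm_eq_abs, mul_comm (n : ℝ)]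
  gcongr
  exact h n

theorem card_inter_Ioc_add_card_inter_Ioc {α : Type*} [LinearOrder α] [LocallyFiniteOrder α]
    (S : Finset α) {a b c : α} (hab : a ≤ b) (hbc : b ≤ c) :
    #(S ∩ Ioc a b) + #(S ∩ Ioc b c) = #(S ∩ Ioc a c) := by
  rw [← Ioc_union_Ioc_eq_Ioc hab hbc, inter_union_distrib_left, card_union_of_disjoint]
  exact (Ioc_disjoint_Ioc_of_le le_rfl).mono inter_subset_right inter_subset_right

/-- `S` has no gap of length two in `I`: it meets every pair `{i, i + 1} ⊆ I`. -/
def GapFreeOn (S I : Finset ℕ) : Prop :=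
  ∀ i ∈ I, i + 1 ∈ I → i ∈ S ∨ i + 1 ∈ S

theorem GapFreeOn.mono {S I J : Finset ℕ} (h : GapFreeOn S J) (hIJ : I ⊆ J) : GapFreeOn S I :=
  fun i hi hi' => h i (hIJ hi) (hIJ hi')

theorem GapFreeOn.le_card_inter_Ioc {S : Finset ℕ} {a p : ℕ}
    (h : GapFreeOn S (Ioc a (a + 2 * p))) : p ≤ #(S ∩ Ioc a (a + 2 * p)) := by
  induction p with
  | zero => exact Nat.zero_le _
  | succ p ih =>
    have hinit : p ≤ #(S ∩ Ioc a (a + 2 * p)) := ih (h.mono (Ioc_subset_Ioc_right (by omega)))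
    have hlast : 0 < #(S ∩ Ioc (a + 2 * p) (a + 2 * (p + 1))) := by
      rw [card_pos]
      rcases h (a + 2 * p + 1) (mem_Ioc.2 (by omega)) (mem_Ioc.2 (by omega)) with hS | hS
      · exact ⟨_, mem_inter.2 ⟨hS, mem_Ioc.2 (by omega)⟩⟩
      · exact ⟨_, mem_inter.2 ⟨hS, mem_Ioc.2 (by omega)⟩⟩
    rw [← card_inter_Ioc_add_card_inter_Ioc S (show a ≤ a + 2 * p by omega) (by omega)]
    omega

/-- The points before `a + 2 * j + 1` split into `j` consecutive pairs, those after it into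
`r - j`. -/
theorem GapFreeOn.lt_card_inter_Ioc {S : Finset ℕ} {a r j : ℕ}
    (h : GapFreeOn S (Ioc a (a + 2 * r + 1))) (hj : j ≤ r) (hS : a + 2 * j + 1 ∈ S) :
    r < #(S ∩ Ioc a (a + 2 * r + 1)) := by
  have hleft : j ≤ #(S ∩ Ioc a (a + 2 * j)) :=
    (h.mono (Ioc_subset_Ioc_right (by omega))).le_card_inter_Ioc
  have hmid : 0 < #(S ∩ Ioc (a + 2 * j) (a + 2 * j + 1)) :=
    card_pos.2 ⟨_, mem_inter.2 ⟨hS, by simp⟩⟩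
  have hright : r - j ≤ #(S ∩ Ioc (a + 2 * j + 1) (a + 2 * r + 1)) := by
    have hend : a + 2 * r + 1 = a + 2 * j + 1 + 2 * (r - j) := by omega
    rw [hend] at h ⊢
    exact (h.mono (Ioc_subset_Ioc_left (by omega))).le_card_inter_Ioc
  have hsplit := card_inter_Ioc_add_card_inter_Ioc S
    (show a ≤ a + 2 * j by omega) (show a + 2 * j ≤ a + 2 * j + 1 by omega)
  rw [← card_inter_Ioc_add_card_inter_Ioc S
    (show a ≤ a + 2 * j + 1 by omega) (show a + 2 * j + 1 ≤ a + 2 * r + 1 by omega)]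
  omega

/-- The `m`-th block `{N m + 1, …, N m + N}` of `N` consecutive positive integers, with `m`
counted from `0`. -/
def block (N m : ℕ) : Finset ℕ :=
  Ioc (N * m) (N * (m + 1))

theorem block_subset_Ioc {N m n : ℕ} (hm : m < n) : block N m ⊆ Ioc 0 (N * n) :=
  Ioc_subset_Ioc (Nat.zero_le _) (Nat.mul_le_mul_left N hm)

theorem exists_mem_block {N n x : ℕ} (hx : x ∈ Ioc 0 (N * n)) : ∃ m < n, x ∈ block N m := by
  rw [mem_Ioc] at hx
  have hN : 0 < N := Nat.pos_of_mul_pos_right (hx.1.trans_le hx.2)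
  refine ⟨(x - 1) / N, (Nat.div_lt_iff_lt_mul hN).2 (by rw [mul_comm]; omega), ?_⟩
  have hdiv := Nat.div_add_mod (x - 1) N
  have hmod := Nat.mod_lt (x - 1) hN
  rw [block, mem_Ioc, mul_add_one]
  omega

theorem lt_of_mem_block_of_lt {N m m' x y : ℕ} (hx : x ∈ block N m) (hy : y ∈ block N m')
    (hm : m < m') : x < y :=
  calc x ≤ N * (m + 1) := (mem_Ioc.1 hx).2
    _ ≤ N * m' := Nat.mul_le_mul_left N hm
    _ < y := (mem_Ioc.1 hy).1

theorem eq_of_mem_block {N m m' x : ℕ} (hx : x ∈ block N m) (hx' : x ∈ block N m') : m = m' := by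
  by_contra hne
  rcases Nat.lt_or_gt_of_ne hne with h | h
  · exact (lt_of_mem_block_of_lt hx hx' h).false
  · exact (lt_of_mem_block_of_lt hx' hx h).false

theorem card_mul_le_card_of_le_card_inter_block {S M : Finset ℕ} {N c : ℕ}
    (h : ∀ m ∈ M, c ≤ #(S ∩ block N m)) : #M * c ≤ #S := by
  have hdisj : (M : Set ℕ).PairwiseDisjoint fun m => S ∩ block N m := fun m _ m' _ hne =>
    disjoint_left.2 fun _ hx hx' =>
      hne (eq_of_mem_block (mem_inter.1 hx).2 (mem_inter.1 hx').2)
  calc #M * c ≤ ∑ m ∈ M, #(S ∩ block N m) := card_nsmul_le_sum M _ c h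
    _ = #(M.biUnion fun m => S ∩ block N m) := (card_biUnion hdisj).symm
    _ ≤ #S := card_le_card (biUnion_subset.2 fun _ _ => inter_subset_left)

theorem GapFreeOn.inter_nonempty_of_bFacet {S F : Finset ℕ} {M k : ℕ}
    (h : GapFreeOn S (Ioc 0 M)) (hk : 0 < k) (hF : BFacet 1 M k F) : (S ∩ F).Nonempty := by
  obtain ⟨i, hbounds, -, rfl⟩ := hF
  obtain ⟨hlo, hhi⟩ := hbounds ⟨0, hk⟩
  have hpair : ({i ⟨0, hk⟩, i ⟨0, hk⟩ + 1} : Finset ℕ) ⊆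
      univ.biUnion fun j => {i j, i j + 1} :=
    subset_biUnion_of_mem (fun j => {i j, i j + 1}) (mem_univ _)
  rcases h (i ⟨0, hk⟩) (mem_Ioc.2 (by omega)) (mem_Ioc.2 (by omega)) with hS | hS
  · exact ⟨_, mem_inter.2 ⟨hS, hpair (by simp)⟩⟩
  · exact ⟨_, mem_inter.2 ⟨hS, hpair (by simp)⟩⟩

theorem exists_bFacet_disjoint_of_not_gapFreeOn {S B : Finset ℕ} {N n : ℕ}
    (hlt : ∀ m ∈ B, m < n) (hgap : ∀ m ∈ B, ¬ GapFreeOn S (block N m)) :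
    ∃ F, BFacet 1 (N * n) #B F ∧ Disjoint S F ∧ ∀ m ∈ B, ∃ x ∈ F, x ∈ block N m := by
  let e := B.orderEmbOfFin rfl
  have he (j : Fin #B) : e j ∈ B := B.orderEmbOfFin_mem rfl j
  have hgap' (j : Fin #B) :
      ∃ i, i ∈ block N (e j) ∧ i + 1 ∈ block N (e j) ∧ i ∉ S ∧ i + 1 ∉ S := by
    simpa only [GapFreeOn, not_forall, not_or, exists_prop] using hgap (e j) (he j)
  choose i hi hi' hiS hiS' using hgap'
  refine ⟨univ.biUnion fun j => {i j, i j + 1}, ⟨i, fun j => ?_, fun j j' hjj' => ?_, rfl⟩, ?_, ?_⟩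
  · have hsub := block_subset_Ioc (N := N) (hlt _ (he j))
    exact ⟨(mem_Ioc.1 (hsub (hi j))).1, (mem_Ioc.1 (hsub (hi' j))).2⟩
  · exact lt_of_mem_block_of_lt (hi' j) (hi j') (e.strictMono hjj')
  · simp only [disjoint_biUnion_right, disjoint_insert_right, disjoint_singleton_right]
    exact fun j _ => ⟨hiS j, hiS' j⟩
  · intro m hm
    obtain ⟨j, rfl⟩ : m ∈ Set.range e := by rwa [range_orderEmbOfFin]
    exact ⟨i j, mem_biUnion.2 ⟨j, mem_univ j, mem_insert_self _ _⟩, hi j⟩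

/-- `S` is a transversal of the set family `𝓕`, given as a predicate. -/
def IsTransversal {α : Type*} [DecidableEq α] (𝓕 : Finset α → Prop) (S : Finset α) : Prop :=
  ∀ F, 𝓕 F → (S ∩ F).Nonempty

/-- The points in odd position of the `m`-th block of length `4k - 1`: the member of type (ii) of
`Δ'_n` belonging to that block. -/
def oddPoints (k m : ℕ) : Finset ℕ :=
  univ.image fun j : Fin (2 * k) => (4 * k - 1) * m + 2 * j.val + 1

theorem mem_oddPoints {k m x : ℕ} :
    x ∈ oddPoints k m ↔ ∃ j < 2 * k, x = (4 * k - 1) * m + 2 * j + 1 := by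
  simp only [oddPoints, mem_image, mem_univ, true_and, Fin.exists_iff, exists_prop, eq_comm]

theorem card_oddPoints_le (k m : ℕ) : #(oddPoints k m) ≤ 2 * k :=
  card_image_le.trans_eq (card_fin _)

theorem oddPoints_subset_block (k m : ℕ) : oddPoints k m ⊆ block (4 * k - 1) m := by
  intro x hx
  obtain ⟨j, hj, rfl⟩ := mem_oddPoints.1 hx
  rw [block, mem_Ioc, mul_add_one]
  omega

theorem mem_or_succ_mem_oddPoints {k m x : ℕ} (hx : x ∈ block (4 * k - 1) m) :
    x ∈ oddPoints k m ∨ x + 1 ∈ oddPoints k m := by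
  rw [block, mem_Ioc, mul_add_one] at hx
  obtain ⟨c, hc | hc⟩ := Nat.even_or_odd' (x - (4 * k - 1) * m)
  · exact .inr (mem_oddPoints.2 ⟨c, by omega, by omega⟩)
  · exact .inl (mem_oddPoints.2 ⟨c, by omega, by omega⟩)

theorem deltaFam'_iff {k n : ℕ} {F : Finset ℕ} :
    DeltaFam' k n F ↔
      (BFacet 1 ((4 * k - 1) * n) k F ∧ ∀ m < n, ¬ F ⊆ block (4 * k - 1) m) ∨
        ∃ m < n, F = oddPoints k m := by
  have hblock (m : ℕ) : Icc ((4 * k - 1) * m + 1) ((4 * k - 1) * m + 4 * k - 1) =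
      block (4 * k - 1) m := by
    rcases k.eq_zero_or_pos with rfl | hk
    · simp [block]
    · ext x
      simp only [block, mem_Icc, mem_Ioc, mul_add_one]
      omega
  simp only [DeltaFam', oddPoints, hblock, not_exists, not_and]

theorem exists_isTransversal_deltaFam'_card_le {k : ℕ} (hk : 0 < k) (n : ℕ) :
    ∃ S ⊆ Icc 1 ((4 * k - 1) * n), IsTransversal (DeltaFam' k n) S ∧ #S ≤ n * (2 * k) := by
  let S := (range n).biUnion (oddPoints k)
  have hodd {m : ℕ} (hm : m < n) : oddPoints k m ⊆ S :=
    subset_biUnion_of_mem _ (mem_range.2 hm)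
  refine ⟨S, biUnion_subset.2 fun m hm => (oddPoints_subset_block k m).trans
    (block_subset_Ioc (mem_range.1 hm)), fun F hF => ?_, ?_⟩
  · rcases deltaFam'_iff.1 hF with ⟨hfacet, -⟩ | ⟨m, hm, rfl⟩
    · refine GapFreeOn.inter_nonempty_of_bFacet (fun x hx _ => ?_) hk hfacet
      obtain ⟨m, hm, hxm⟩ := exists_mem_block hx
      exact (mem_or_succ_mem_oddPoints hxm).imp (@hodd m hm x) (@hodd m hm (x + 1))
    · rw [inter_eq_right.2 (hodd hm)]
      exact ⟨_, mem_oddPoints.2 ⟨0, by omega, rfl⟩⟩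
  · simpa only [card_range] using
      card_biUnion_le_card_mul (range n) (oddPoints k) (2 * k) fun m _ => card_oddPoints_le k m

theorem IsTransversal.card_lt_of_not_gapFreeOn {k n : ℕ} {S B : Finset ℕ} (hk : 2 ≤ k)
    (hS : IsTransversal (DeltaFam' k n) S) (hlt : ∀ m ∈ B, m < n)
    (hgap : ∀ m ∈ B, ¬ GapFreeOn S (block (4 * k - 1) m)) : #B < k := by
  by_contra! hkB
  obtain ⟨C, hCB, rfl⟩ := exists_subset_card_eq hkB
  obtain ⟨F, hfacet, hdisj, hmeet⟩ := exists_bFacet_disjoint_of_not_gapFreeOn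
    (fun m hm => hlt m (hCB hm)) fun m hm => hgap m (hCB hm)
  refine (hS F (deltaFam'_iff.2 (.inl ⟨hfacet, fun m _ hFm => ?_⟩))).ne_empty
    (disjoint_iff_inter_eq_empty.1 hdisj)
  obtain ⟨m', hm', hne⟩ := exists_mem_ne hk m
  obtain ⟨x, hxF, hx⟩ := hmeet m' hm'
  exact hne (eq_of_mem_block hx (hFm hxF))

theorem IsTransversal.two_mul_le_card_inter_block {k n m : ℕ} {S : Finset ℕ}
    (hS : IsTransversal (DeltaFam' k n) S) (hm : m < n)
    (hgap : GapFreeOn S (block (4 * k - 1) m)) : 2 * k ≤ #(S ∩ block (4 * k - 1) m) := by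
  obtain ⟨x, hx⟩ := hS (oddPoints k m) (deltaFam'_iff.2 (.inr ⟨m, hm, rfl⟩))
  obtain ⟨hxS, hxodd⟩ := mem_inter.1 hx
  obtain ⟨j, hj, rfl⟩ := mem_oddPoints.1 hxodd
  have hend : (4 * k - 1) * (m + 1) = (4 * k - 1) * m + 2 * (2 * k - 1) + 1 := by
    rw [mul_add_one]
    omega
  rw [block, hend] at hgap ⊢
  have := hgap.lt_card_inter_Ioc (Nat.le_sub_one_of_lt hj) hxS
  omega

theorem IsTransversal.mul_le_card_add {k n : ℕ} {S : Finset ℕ} (hk : 2 ≤ k)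
    (hS : IsTransversal (DeltaFam' k n) S) : n * (2 * k) ≤ #S + k * (2 * k) := by
  classical
  let good := (range n).filter fun m => GapFreeOn S (block (4 * k - 1) m)
  let bad := (range n).filter fun m => ¬ GapFreeOn S (block (4 * k - 1) m)
  have hgood : #good * (2 * k) ≤ #S := card_mul_le_card_of_le_card_inter_block fun m hm =>
    hS.two_mul_le_card_inter_block (mem_range.1 (mem_filter.1 hm).1) (mem_filter.1 hm).2
  have hbad : #bad < k := hS.card_lt_of_not_gapFreeOn hk
    (fun m hm => mem_range.1 (mem_filter.1 hm).1) fun m hm => (mem_filter.1 hm).2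
  have hsum : #good + #bad = n := (card_filter_add_card_filter_not _).trans (card_range n)
  calc n * (2 * k) = #good * (2 * k) + #bad * (2 * k) := by rw [← hsum, add_mul]
    _ ≤ #S + k * (2 * k) := add_le_add hgood (Nat.mul_le_mul_right _ hbad.le)

theorem deltaT'_le_card {k n : ℕ} {S : Finset ℕ} (hsub : S ⊆ Icc 1 ((4 * k - 1) * n))
    (hS : IsTransversal (DeltaFam' k n) S) : DeltaT' k n ≤ #S :=
  Nat.sInf_le ⟨S, hsub, hS, rfl⟩

theorem exists_isTransversal_card_eq_deltaT' {k : ℕ} (hk : 0 < k) (n : ℕ) :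
    ∃ S, IsTransversal (DeltaFam' k n) S ∧ #S = DeltaT' k n := by
  obtain ⟨S₀, hsub₀, hS₀, -⟩ := exists_isTransversal_deltaFam'_card_le hk n
  obtain ⟨S, -, hS, hcard⟩ : DeltaT' k n ∈ _ := Nat.sInf_mem ⟨#S₀, S₀, hsub₀, hS₀, rfl⟩
  exact ⟨S, hS, hcard⟩

theorem deltaT'_le {k : ℕ} (hk : 0 < k) (n : ℕ) : DeltaT' k n ≤ n * (2 * k) := by
  obtain ⟨S, hsub, hS, hcard⟩ := exists_isTransversal_deltaFam'_card_le hk n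
  exact (deltaT'_le_card hsub hS).trans hcard

theorem mul_le_deltaT'_add {k : ℕ} (hk : 2 ≤ k) (n : ℕ) :
    n * (2 * k) ≤ DeltaT' k n + k * (2 * k) := by
  obtain ⟨S, hS, hcard⟩ := exists_isTransversal_card_eq_deltaT' (zero_lt_two.trans_le hk) n
  exact hcard ▸ hS.mul_le_card_add hk

theorem stmt_17 (k : ℕ) (hk : 2 ≤ k) :
    Filter.Tendsto (fun n : ℕ => (DeltaT' k n : ℝ) / ((4 * (k : ℝ) - 1) * (n : ℝ)))
      Filter.atTop (nhds (2 * (k : ℝ) / (4 * (k : ℝ) - 1))) := by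
  have hbound (n : ℕ) : |(DeltaT' k n : ℝ) - 2 * k * n| ≤ k * (2 * k) := by
    have hupper : (DeltaT' k n : ℝ) ≤ n * (2 * k) := mod_cast deltaT'_le (by omega) n
    have hlower : (n : ℝ) * (2 * k) ≤ DeltaT' k n + k * (2 * k) := mod_cast mul_le_deltaT'_add hk n
    have hconst : (0 : ℝ) ≤ k * (2 * k) := by positivity
    exact abs_le.2 ⟨by linarith, le_trans (by linarith) hconst⟩
  simpa only [div_div, mul_comm] using
    (tendsto_div_natCast_of_abs_sub_mul_le hbound).div_const (4 * (k : ℝ) - 1)
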